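/- For supercritical Bernoulli site percolation on Z^2 with parameter p ≥ 8/9, the expected size of the connected component G of the complement of the infinite open cluster containing the origin satisfies E|G| ≤ α(1−p) for some universal constant α > 0. -/

import Mathlib

open MeasureTheory

noncomputable section

/-- Nearest-neighbor (`l¹`) adjacency on `ℤ²`. -/
def adj2 (a b : ℤ × ℤ) : Prop := |a.1 - b.1| + |a.2 - b.2| = 1

/-- Connectivity of `a` and `b` by a nearest-neighbor path inside the set `A`. -/
def ConnIn (A : Set (ℤ × ℤ)) (a b : ℤ × ℤ) : Prop :=
  Relation.ReflTransGen (fun u v => u ∈ A ∧ v ∈ A ∧ adj2 u v) a b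

/-- The union of the infinite open clusters of the configuration `ω`
(`ω x = true` meaning `x` open); a.s. there is a unique such cluster in the
supercritical regime. -/
def InfCluster (ω : (ℤ × ℤ) → Bool) : Set (ℤ × ℤ) :=
  {x | ω x = true ∧ {y | ConnIn {z | ω z = true} x y}.Infinite}

/-- The connected component of the complement of the infinite cluster
containing the origin (empty if the origin lies in the infinite cluster). -/
def CompOfOrigin (ω : (ℤ × ℤ) → Bool) : Set (ℤ × ℤ) :=
  {y | (0, 0) ∉ InfCluster ω ∧ ConnIn (InfCluster ω)ᶜ (0, 0) y}

/-!
This is a Peierls argument on the star lattice. If the component of the origin is large, it is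
surrounded by its boundary with the unbounded part of its complement, which consists of closed
sites and is connected for nearest-neighbor and diagonal steps. The connectedness holds because
every closed 1-cochain on the square lattice is exact: the crossings of one connected piece of the
boundary form such a cochain, and its potential takes one value on each side of the boundary, so
that piece is crossed wherever the boundary is.

The site `x` of maximal sup norm in the closed star cluster of the boundary bounds the component
by `(2‖x‖ + 1)²`. Since the boundary surrounds the origin, a closed star path of `‖x‖` steps starts
at `x`, which has probability at most `8 ^ ‖x‖ * (1 - p) ^ (‖x‖ + 1)`. The sum over `x` of the
product of the two bounds is `O(1 - p)` as soon as `8 (1 - p)` stays away from `1`.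
-/

/-! ### Closed paths in a graph -/

section ClosedPaths

variable {V : Type*} {G : SimpleGraph V} {S T : Set V} {u v w : V} {d n : ℕ}

/-- The cluster of `v` in `S`: the vertices joined to `v` by a walk of `G` with all its vertices,
including `v` itself, in `S`. -/
def clusterIn (G : SimpleGraph V) (S : Set V) (v : V) : Set V :=
  {w | ∃ p : G.Walk v w, ∀ z ∈ p.support, z ∈ S}

lemma mem_clusterIn_self (hv : v ∈ S) : v ∈ clusterIn G S v :=
  ⟨.nil, by simpa using hv⟩

lemma clusterIn_subset : clusterIn G S v ⊆ S :=
  fun _ ⟨p, hp⟩ => hp _ p.end_mem_support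

lemma clusterIn_mono (h : S ⊆ T) : clusterIn G S v ⊆ clusterIn G T v :=
  fun _ ⟨p, hp⟩ => ⟨p, fun z hz => h (hp z hz)⟩

lemma mem_clusterIn_symm (h : w ∈ clusterIn G S v) : v ∈ clusterIn G S w := by
  obtain ⟨p, hp⟩ := h
  exact ⟨p.reverse, by simpa using hp⟩

lemma mem_clusterIn_trans (hv : v ∈ clusterIn G S u) (hw : w ∈ clusterIn G S v) :
    w ∈ clusterIn G S u := by
  obtain ⟨p, hp⟩ := hv
  obtain ⟨q, hq⟩ := hw
  refine ⟨p.append q, fun z hz => ?_⟩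
  exact ((p.mem_support_append_iff q).1 hz).elim (hp z) (hq z)

lemma mem_clusterIn_of_adj (hv : v ∈ clusterIn G S u) (h : G.Adj v w) (hw : w ∈ S) :
    w ∈ clusterIn G S u :=
  mem_clusterIn_trans hv ⟨.cons h .nil, by simpa using ⟨clusterIn_subset hv, hw⟩⟩

/-- The event that some self-avoiding walk of `n` steps of `G` started at `v` visits only closed
vertices. -/
def closedPathEvent (G : SimpleGraph V) (n : ℕ) (v : V) : Set (V → Bool) :=
  {ω | ∃ w, ∃ p : G.Walk v w, p.IsPath ∧ p.length = n ∧ ∀ z ∈ p.support, ω z = false}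

lemma mem_closedPathEvent_of_le_dist {ω : V → Bool}
    (hw : w ∈ clusterIn G {z | ω z = false} v) (hn : n ≤ G.dist v w) :
    ω ∈ closedPathEvent G n v := by
  classical
  obtain ⟨p, hp⟩ := hw
  refine ⟨_, p.bypass.take n, p.bypass_isPath.take n, ?_, fun z hz => hp z ?_⟩
  · rw [SimpleGraph.Walk.take_length, min_eq_left (hn.trans (G.dist_le _))]
  · exact p.support_bypass_subset_support ((p.bypass.isSubwalk_take n).support_subset hz)

/-- The vertex sequences of the walks of `n` steps of `G` started at `v`. -/
def walkSupports [DecidableEq V] (G : SimpleGraph V) [G.LocallyFinite] : ℕ → V → Finset (List V)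
  | 0, v => {[v]}
  | n + 1, v => (G.neighborFinset v).biUnion fun w => (walkSupports G n w).image (v :: ·)

variable [G.LocallyFinite]

lemma mem_walkSupports [DecidableEq V] {l : List V} :
    l ∈ walkSupports G n v ↔ ∃ w, ∃ p : G.Walk v w, p.length = n ∧ p.support = l := by
  induction n generalizing v l with
  | zero =>
    simp only [walkSupports, Finset.mem_singleton]
    constructor
    · rintro rfl
      exact ⟨v, .nil, rfl, rfl⟩
    · rintro ⟨w, p, hp, rfl⟩
      cases p with
      | nil => rfl
      | cons h p => simp at hp
  | succ n ih =>
    simp only [walkSupports, Finset.mem_biUnion, Finset.mem_image, ih,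
      SimpleGraph.mem_neighborFinset]
    constructor
    · rintro ⟨u, huv, _, ⟨w, p, hp, rfl⟩, rfl⟩
      exact ⟨w, .cons huv p, by simp [hp], rfl⟩
    · rintro ⟨w, p, hp, rfl⟩
      cases p with
      | nil => simp at hp
      | cons h p => exact ⟨_, h, p.support, ⟨w, p, by simpa using hp, rfl⟩, rfl⟩

lemma card_walkSupports_le [DecidableEq V] (hd : ∀ v, G.degree v ≤ d) (n : ℕ) (v : V) :
    (walkSupports G n v).card ≤ d ^ n := by
  induction n generalizing v with
  | zero => simp [walkSupports]
  | succ n ih =>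
    calc (walkSupports G (n + 1) v).card
        ≤ G.degree v * d ^ n :=
          Finset.card_biUnion_le_card_mul _ _ _ fun w _ => Finset.card_image_le.trans (ih w)
      _ ≤ d ^ (n + 1) := by rw [pow_succ']; gcongr; exact hd v

lemma closedPathEvent_eq_biUnion [DecidableEq V] (n : ℕ) (v : V) :
    closedPathEvent G n v =
      ⋃ l ∈ (walkSupports G n v).filter List.Nodup, {ω | ∀ z ∈ l.toFinset, ω z = false} := by
  ext ω
  simp only [closedPathEvent, Set.mem_ofPred_eq, Set.mem_iUnion, Finset.mem_filter,
    mem_walkSupports, List.mem_toFinset, exists_prop, SimpleGraph.Walk.isPath_def]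
  constructor
  · rintro ⟨w, p, hpath, hlen, hclosed⟩
    exact ⟨p.support, ⟨⟨w, p, hlen, rfl⟩, hpath⟩, hclosed⟩
  · rintro ⟨_, ⟨⟨w, p, hlen, rfl⟩, hpath⟩, hclosed⟩
    exact ⟨w, p, hpath, hlen, hclosed⟩

lemma measurableSet_closedPathEvent (n : ℕ) (v : V) : MeasurableSet (closedPathEvent G n v) := by
  classical
  rw [closedPathEvent_eq_biUnion]
  refine Finset.measurableSet_biUnion _ fun l _ => ?_
  simp only [Set.ofPred_forall]
  exact Finset.measurableSet_biInter _ fun z _ => measurable_pi_apply z (measurableSet_singleton _)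

lemma measure_closedPathEvent_le {μ : Measure (V → Bool)} {q : ENNReal}
    (hμ : ∀ F : Finset V, μ {ω | ∀ z ∈ F, ω z = false} ≤ q ^ F.card)
    (hd : ∀ v, G.degree v ≤ d) (n : ℕ) (v : V) :
    μ (closedPathEvent G n v) ≤ d ^ n * q ^ (n + 1) := by
  classical
  have measure_path_le : ∀ l ∈ (walkSupports G n v).filter List.Nodup,
      μ {ω | ∀ z ∈ l.toFinset, ω z = false} ≤ q ^ (n + 1) := by
    intro l hl
    obtain ⟨hl, hnodup⟩ := Finset.mem_filter.1 hl
    obtain ⟨w, p, rfl, rfl⟩ := mem_walkSupports.1 hl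
    simpa [List.toFinset_card_of_nodup hnodup] using hμ p.support.toFinset
  calc μ (closedPathEvent G n v)
      ≤ ∑ l ∈ (walkSupports G n v).filter List.Nodup, μ {ω | ∀ z ∈ l.toFinset, ω z = false} := by
        rw [closedPathEvent_eq_biUnion]
        exact measure_biUnion_finset_le _ _
    _ ≤ ((walkSupports G n v).filter List.Nodup).card * q ^ (n + 1) := by
        simpa using Finset.sum_le_card_nsmul _ _ _ measure_path_le
    _ ≤ d ^ n * q ^ (n + 1) := by
        gcongr
        exact_mod_cast (Finset.card_filter_le _ _).trans (card_walkSupports_le hd n v)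

end ClosedPaths

/-! ### Paths and potentials on the square lattice -/

lemma adj2_symm {a b : ℤ × ℤ} (h : adj2 a b) : adj2 b a := by
  rwa [adj2, abs_sub_comm b.1, abs_sub_comm b.2]

lemma adj2_iff {x y : ℤ} {b : ℤ × ℤ} :
    adj2 (x, y) b ↔ b = (x + 1, y) ∨ b = (x - 1, y) ∨ b = (x, y + 1) ∨ b = (x, y - 1) := by
  simp only [adj2, Prod.ext_iff]
  rcases abs_cases (x - b.1) with h₁ | h₁ <;> rcases abs_cases (y - b.2) with h₂ | h₂ <;> omega

lemma adj2_right (x y : ℤ) : adj2 (x, y) (x + 1, y) := by simp [adj2]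

lemma adj2_up (x y : ℤ) : adj2 (x, y) (x, y + 1) := by simp [adj2]

namespace ConnIn

variable {A B : Set (ℤ × ℤ)} {a b c : ℤ × ℤ}

lemma refl (A : Set (ℤ × ℤ)) (a : ℤ × ℤ) : ConnIn A a a :=
  Relation.ReflTransGen.refl

lemma trans (hab : ConnIn A a b) (hbc : ConnIn A b c) : ConnIn A a c :=
  Relation.ReflTransGen.trans hab hbc

lemma tail (hab : ConnIn A a b) (hb : b ∈ A) (hc : c ∈ A) (hbc : adj2 b c) : ConnIn A a c :=
  Relation.ReflTransGen.tail hab ⟨hb, hc, hbc⟩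

lemma of_adj (ha : a ∈ A) (hb : b ∈ A) (hab : adj2 a b) : ConnIn A a b :=
  (refl A a).tail ha hb hab

lemma symm (h : ConnIn A a b) : ConnIn A b a := by
  induction h with
  | refl => exact refl A a
  | tail _ h ih => exact (of_adj h.2.1 h.1 (adj2_symm h.2.2)).trans ih

lemma mono (h : ConnIn A a b) (hAB : A ⊆ B) : ConnIn B a b :=
  Relation.ReflTransGen.mono (fun _ _ h => ⟨hAB h.1, hAB h.2.1, h.2.2⟩) _ _ h

lemma mem (h : ConnIn A a b) (ha : a ∈ A) : b ∈ A := by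
  induction h with
  | refl => exact ha
  | tail _ h _ => exact h.2.1

lemma apply_eq_of_forall_adj {M : Type*} {f : ℤ × ℤ → M} (h : ConnIn A a b)
    (hf : ∀ x ∈ A, ∀ y ∈ A, adj2 x y → f x = f y) : f a = f b := by
  induction h with
  | refl => rfl
  | tail _ h ih => exact ih.trans (hf _ h.1 _ h.2.1 h.2.2)

end ConnIn

lemma exists_antidifference {M : Type*} [AddCommGroup M] (g : ℤ → M) :
    ∃ F : ℤ → M, F 0 = 0 ∧ ∀ n, F (n + 1) = F n + g n := by
  let F : ℤ → M := fun n => Int.inductionOn' (motive := fun _ => M) n 0 0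
    (fun k _ s => s + g k) (fun k _ s => s - g (k - 1))
  refine ⟨F, Int.inductionOn'_self, fun n => ?_⟩
  rcases le_or_gt 0 n with hn | hn
  · exact Int.inductionOn'_add_one hn
  · have h : F (n + 1 - 1) = F (n + 1) - g (n + 1 - 1) := Int.inductionOn'_sub_one (by omega)
    rw [add_sub_cancel_right] at h
    rw [h, sub_add_cancel]

lemma exists_potential {M : Type*} [AddCommGroup M] (c : ℤ × ℤ → ℤ × ℤ → M)
    (hanti : ∀ a b, c b a = -c a b)
    (hsquare : ∀ x y, c (x, y) (x + 1, y) + c (x + 1, y) (x + 1, y + 1) =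
      c (x, y) (x, y + 1) + c (x, y + 1) (x + 1, y + 1)) :
    ∃ f : ℤ × ℤ → M, ∀ a b, adj2 a b → c a b = f b - f a := by
  obtain ⟨H, -, hH⟩ := exists_antidifference fun x => c (x, 0) (x + 1, 0)
  choose V hV₀ hV using fun x => exists_antidifference fun y => c (x, y) (x, y + 1)
  let f : ℤ × ℤ → M := fun a => H a.1 + V a.1 a.2
  have vertical : ∀ x y, c (x, y) (x, y + 1) = f (x, y + 1) - f (x, y) := by
    intro x y
    simp only [f, hV]
    abel
  have horizontal_step : ∀ x y, c (x, y) (x + 1, y) = f (x + 1, y) - f (x, y) ↔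
      c (x, y + 1) (x + 1, y + 1) = f (x + 1, y + 1) - f (x, y + 1) := by
    intro x y
    have h := hsquare x y
    rw [vertical, vertical, ← sub_eq_zero] at h
    rw [← sub_eq_zero, ← sub_eq_zero (a := c (x, y + 1) _)]
    refine Eq.congr_left ?_
    rw [← sub_eq_zero, ← h]
    abel
  have horizontal : ∀ x y, c (x, y) (x + 1, y) = f (x + 1, y) - f (x, y) := by
    intro x y
    induction y using Int.induction_on with
    | zero => simp [f, hH, hV₀]
    | succ k ih => exact (horizontal_step x k).1 ih
    | pred k ih => exact (horizontal_step x (-k - 1)).2 (by simpa using ih)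
  refine ⟨f, ?_⟩
  rintro ⟨x, y⟩ b hab
  rcases adj2_iff.1 hab with rfl | rfl | rfl | rfl
  · exact horizontal x y
  · rw [hanti, ← neg_sub]
    simpa using congrArg (-·) (horizontal (x - 1) y)
  · exact vertical x y
  · rw [hanti, ← neg_sub]
    simpa using congrArg (-·) (vertical x (y - 1))

/-! ### Connected sets and outer boundaries -/

section ConnectedSets

variable {A D F O S : Set (ℤ × ℤ)} {a c u v : ℤ × ℤ}

/-- Connectedness of a set of sites for nearest-neighbor paths; the empty set qualifies. -/
def ConnectedSet (S : Set (ℤ × ℤ)) : Prop := ∀ u ∈ S, ∀ v ∈ S, ConnIn S u v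

/-- The connected component of `a` in `A`; it is `{a}` when `a ∉ A`. -/
def compIn (A : Set (ℤ × ℤ)) (a : ℤ × ℤ) : Set (ℤ × ℤ) := {y | ConnIn A a y}

/-- The outer vertex boundary of `D`. -/
def outerBoundary (D : Set (ℤ × ℤ)) : Set (ℤ × ℤ) := {v | v ∉ D ∧ ∃ u ∈ D, adj2 u v}

lemma connectedSet_compIn (A : Set (ℤ × ℤ)) (a : ℤ × ℤ) : ConnectedSet (compIn A a) := by
  have connIn_of_mem : ∀ u ∈ compIn A a, ConnIn (compIn A a) a u := by
    intro u hu
    induction hu with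
    | refl => exact ConnIn.refl _ a
    | tail h₁ h₂ ih => exact ih.tail h₁ (h₁.tail h₂) h₂.2.2
  exact fun u hu v hv => (connIn_of_mem u hu).symm.trans (connIn_of_mem v hv)

lemma notMem_of_mem_outerBoundary_compIn (ha : a ∈ A) (hv : v ∈ outerBoundary (compIn A a)) :
    v ∉ A := by
  obtain ⟨hv, u, hu, huv⟩ := hv
  exact fun hvA => hv (hu.tail (hu.mem ha) hvA huv)

lemma connectedSet_union_outerBoundary (hA : ConnectedSet A) :
    ConnectedSet (A ∪ outerBoundary A) := by
  have exists_connIn : ∀ u ∈ A ∪ outerBoundary A, ∃ a ∈ A, ConnIn (A ∪ outerBoundary A) u a := by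
    rintro u (hu | hu)
    · exact ⟨u, hu, ConnIn.refl _ u⟩
    · obtain ⟨a, ha, hau⟩ := hu.2
      exact ⟨a, ha, ConnIn.of_adj (Or.inr hu) (Or.inl ha) (adj2_symm hau)⟩
  intro u hu v hv
  obtain ⟨a, ha, hua⟩ := exists_connIn u hu
  obtain ⟨b, hb, hvb⟩ := exists_connIn v hv
  exact (hua.trans ((hA a ha b hb).mono Set.subset_union_left)).trans hvb.symm

lemma mem_of_disjoint_outerBoundary (hS : ConnectedSet S) (hSD : Disjoint S (outerBoundary D))
    (hu : u ∈ S) (huD : u ∈ D) (hv : v ∈ S) : v ∈ D := by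
  induction hS u hu v hv with
  | refl => exact huD
  | tail _ h ih =>
    by_contra hcD
    exact Set.disjoint_left.1 hSD h.2.1 ⟨hcD, _, ih h.1, h.2.2⟩

lemma reflTransGen_of_ordConnected {L : Set ℤ} (hL : L.OrdConnected) {s t : ℤ} (hs : s ∈ L)
    (ht : t ∈ L) : Relation.ReflTransGen (fun i j => i ∈ L ∧ j ∈ L ∧ |i - j| = 1) s t := by
  refine reflTransGen_of_succ _ (fun i hi => ?_) fun i hi => ?_
  · exact ⟨hL.out hs ht ⟨hi.1, hi.2.le⟩, hL.out hs ht ⟨hi.1.trans (Order.le_succ i), hi.2⟩, by simp⟩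
  · exact ⟨hL.out ht hs ⟨hi.1.trans (Order.le_succ i), hi.2⟩, hL.out ht hs ⟨hi.1, hi.2.le⟩, by simp⟩

lemma connectedSet_prod {I J : Set ℤ} (hI : I.OrdConnected) (hJ : J.OrdConnected) :
    ConnectedSet (I ×ˢ J) := by
  rintro ⟨x, y⟩ ⟨hx, hy⟩ ⟨x', y'⟩ ⟨hx', hy'⟩
  have horizontal : ConnIn (I ×ˢ J) (x, y) (x', y) :=
    Relation.ReflTransGen.lift (·, y)
      (fun i j h => ⟨⟨h.1, hy⟩, ⟨h.2.1, hy⟩, by simpa [adj2] using h.2.2⟩) _ _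
      (reflTransGen_of_ordConnected hI hx hx')
  have vertical : ConnIn (I ×ˢ J) (x', y) (x', y') :=
    Relation.ReflTransGen.lift (x', ·)
      (fun i j h => ⟨⟨hx', h.1⟩, ⟨hx', h.2.1⟩, by simpa [adj2] using h.2.2⟩) _ _
      (reflTransGen_of_ordConnected hJ hy hy')
  exact horizontal.trans vertical

lemma connectedSet_univ : ConnectedSet Set.univ := by
  simpa using connectedSet_prod Set.ordConnected_univ Set.ordConnected_univ

lemma outerBoundary_nonempty (hD : D.Nonempty) (hDc : Dᶜ.Nonempty) :
    (outerBoundary D).Nonempty := by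
  obtain ⟨u, hu⟩ := hD
  obtain ⟨v, hv⟩ := hDc
  by_contra! hempty
  exact hv (mem_of_disjoint_outerBoundary connectedSet_univ (by simp [hempty]) trivial hu trivial)

lemma outerBoundary_compIn_compl_subset (hc : c ∉ A) : outerBoundary (compIn Aᶜ c) ⊆ A :=
  fun _ hv => not_not.1 (notMem_of_mem_outerBoundary_compIn hc hv)

lemma connectedSet_compl_compIn_compl (hA : ConnectedSet A) (ha : a ∈ A) (hc : c ∉ A) :
    ConnectedSet (compIn Aᶜ c)ᶜ := by
  have subset_compl : A ⊆ (compIn Aᶜ c)ᶜ := fun x hx hxD => hxD.mem hc hx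
  have connIn_of_notMem : ∀ v ∉ compIn Aᶜ c, ConnIn (compIn Aᶜ c)ᶜ a v := by
    intro v hv
    induction connectedSet_univ a trivial v trivial with
    | refl => exact ConnIn.refl _ a
    | @tail y z _ h ih =>
      by_cases hy : y ∈ compIn Aᶜ c
      · have hz : z ∈ A := outerBoundary_compIn_compl_subset hc ⟨hv, y, hy, h.2.2⟩
        exact (hA a ha z hz).mono subset_compl
      · exact (ih hy).tail hy hv h.2.2
  exact fun u hu v hv => (connIn_of_notMem u hu).symm.trans (connIn_of_notMem v hv)

lemma finite_outerBoundary (hD : D.Finite) : (outerBoundary D).Finite := by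
  have finite_neighbors (u : ℤ × ℤ) : {v | adj2 u v}.Finite := by
    obtain ⟨x, y⟩ := u
    refine Set.Finite.subset (s := {(x + 1, y), (x - 1, y), (x, y + 1), (x, y - 1)})
      (Set.toFinite _) fun v hv => ?_
    simpa using adj2_iff.1 hv
  exact (hD.biUnion fun u _ => finite_neighbors u).subset fun v hv => by simpa using hv.2

lemma finite_compIn_union (hF : F.Finite) (hO : ∀ x ∈ O, (compIn O x).Finite) (ha : a ∈ F) :
    (compIn (F ∪ O) a).Finite := by
  refine (hF.union (((finite_outerBoundary hF).inter_of_left O).biUnion fun u hu =>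
    hO u hu.2)).subset fun y hy => ?_
  induction hy with
  | refl => exact Or.inl ha
  | @tail b c _ h ih =>
    by_cases hcF : c ∈ F
    · exact Or.inl hcF
    have hcO : c ∈ O := h.2.1.resolve_left hcF
    refine Or.inr (Set.mem_iUnion₂.2 ?_)
    rcases ih with hbF | hb
    · exact ⟨c, ⟨⟨hcF, b, hbF, h.2.2⟩, hcO⟩, ConnIn.refl O c⟩
    · obtain ⟨u, hu, hub⟩ := Set.mem_iUnion₂.1 hb
      exact ⟨u, hu, ConnIn.tail hub (ConnIn.mem hub hu.2) hcO h.2.2⟩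

end ConnectedSets

/-! ### The star lattice -/

/-- The `ℓ^∞` norm on `ℤ²`, as a natural number; its spheres are the sets `Finset.box n`. -/
def supNorm (x : ℤ × ℤ) : ℕ := max x.1.natAbs x.2.natAbs

lemma mem_box_iff_supNorm_eq {x : ℤ × ℤ} {n : ℕ} : x ∈ Finset.box n ↔ supNorm x = n :=
  Int.mem_box

lemma supNorm_le_eq_Icc (n : ℕ) :
    {x | supNorm x ≤ n} = (Finset.Icc (-(n : ℤ), -(n : ℤ)) (n, n) : Set (ℤ × ℤ)) := by
  ext ⟨x, y⟩
  simp only [supNorm, Set.mem_ofPred_eq, Finset.coe_Icc, Set.mem_Icc, Prod.mk_le_mk]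
  omega

lemma finite_supNorm_le (n : ℕ) : {x | supNorm x ≤ n}.Finite := by
  rw [supNorm_le_eq_Icc]
  exact Finset.finite_toSet _

lemma encard_supNorm_le (n : ℕ) : {x | supNorm x ≤ n}.encard = ((2 * n + 1) ^ 2 : ℕ) := by
  rw [supNorm_le_eq_Icc, Set.encard_coe_eq_coe_finsetCard, Finset.card_Icc_prod, Int.card_Icc,
    show ((n : ℤ) + 1 - -n).toNat = 2 * n + 1 by omega, sq]

lemma exists_supNorm_le_of_finite {A : Set (ℤ × ℤ)} (hA : A.Finite) :
    ∃ n, ∀ x ∈ A, supNorm x ≤ n := by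
  obtain ⟨n, hn⟩ := (hA.image supNorm).bddAbove
  exact ⟨n, fun x hx => hn ⟨x, hx, rfl⟩⟩

lemma exists_lt_supNorm_of_infinite {A : Set (ℤ × ℤ)} (hA : A.Infinite) (n : ℕ) :
    ∃ x ∈ A, n < supNorm x := by
  by_contra! h
  exact hA ((finite_supNorm_le n).subset h)

/-- The star lattice: `ℤ²` with nearest-neighbor and diagonal adjacency. -/
def starGraph : SimpleGraph (ℤ × ℤ) where
  Adj a b := supNorm (b - a) = 1
  symm := ⟨fun a b h => by simp only [supNorm, Prod.fst_sub, Prod.snd_sub] at *; omega⟩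
  loopless := ⟨fun a h => by simp [supNorm] at h⟩

lemma mem_neighborSet_starGraph_iff {a b : ℤ × ℤ} :
    b ∈ starGraph.neighborSet a ↔ b ∈ (Finset.box 1).map (addLeftEmbedding a) := by
  simp only [Finset.mem_map, mem_box_iff_supNorm_eq, addLeftEmbedding_apply]
  exact ⟨fun h => ⟨b - a, h, by simp⟩, by rintro ⟨c, hc, rfl⟩; simpa [starGraph] using hc⟩

instance : starGraph.LocallyFinite :=
  fun _ => Fintype.ofFinset _ fun _ => mem_neighborSet_starGraph_iff.symm

lemma degree_starGraph (a : ℤ × ℤ) : starGraph.degree a = 8 := by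
  rw [SimpleGraph.degree, SimpleGraph.neighborFinset, Set.toFinset_ofFinset, Finset.card_map,
    Int.card_box one_ne_zero, mul_one]

lemma supNorm_sub_le_dist {a b : ℤ × ℤ} (h : starGraph.Reachable a b) :
    supNorm (b - a) ≤ starGraph.dist a b := by
  have le_length : ∀ {a b : ℤ × ℤ} (p : starGraph.Walk a b), supNorm (b - a) ≤ p.length := by
    intro a b p
    induction p with
    | nil => simp [supNorm]
    | @cons a c b hac p ih =>
      have hac : supNorm (c - a) = 1 := hac
      simp only [supNorm, Prod.fst_sub, Prod.snd_sub, SimpleGraph.Walk.length_cons] at *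
      omega
  obtain ⟨p, hp⟩ := h.exists_walk_length_eq_dist
  exact hp ▸ le_length p

/-! ### Star-connectedness of outer boundaries -/

section Crossing

variable {D K : Set (ℤ × ℤ)} {v w : ℤ × ℤ}

/-- The crossing number of the oriented edge from `a` to `b`: `1` if the edge leaves `D` into `K`,
`-1` if it enters `D` from `K`, and `0` otherwise (when `D` and `K` are disjoint). -/
def crossing (D K : Set (ℤ × ℤ)) (a b : ℤ × ℤ) : ℤ :=
  D.indicator 1 a * K.indicator 1 b - D.indicator 1 b * K.indicator 1 a

lemma crossing_comm (a b : ℤ × ℤ) : crossing D K b a = -crossing D K a b := by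
  simp only [crossing]
  ring

/-- If `Q` meets `K` then all outer boundary sites in `Q` belong to `K`, and `k = 1` works. -/
lemma exists_crossing_eq_mul_sub (hK : K ⊆ outerBoundary D)
    (hstar : ∀ a ∈ K, ∀ b ∈ outerBoundary D, starGraph.Adj a b → b ∈ K) {Q : Set (ℤ × ℤ)}
    (hQ : ∀ a ∈ Q, ∀ b ∈ Q, supNorm (b - a) ≤ 1) :
    ∃ k : ℤ, ∀ a ∈ Q, ∀ b ∈ Q, adj2 a b →
      crossing D K a b = k * (D.indicator 1 a - D.indicator 1 b) := by
  by_cases hQK : (Q ∩ K).Nonempty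
  · obtain ⟨z, hzQ, hzK⟩ := hQK
    have mem_of_outerBoundary : ∀ b ∈ Q, b ∈ outerBoundary D → b ∈ K := by
      intro b hb hbD
      rcases (hQ z hzQ b hb).lt_or_eq with h | h
      · have hbz : b = z := by
          simp only [supNorm, Prod.fst_sub, Prod.snd_sub] at h
          ext <;> omega
        rwa [hbz]
      · exact hstar z hzK b hbD h
    have mem_iff : ∀ a ∈ D, ∀ b ∈ Q, adj2 a b → (b ∈ K ↔ b ∉ D) := fun a ha b hb hab =>
      ⟨fun h => (hK h).1, fun h => mem_of_outerBoundary b hb ⟨h, a, ha, hab⟩⟩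
    refine ⟨1, fun a ha b hb hab => ?_⟩
    by_cases haD : a ∈ D <;> by_cases hbD : b ∈ D
    · simp [crossing, haD, hbD, mem_iff a haD b hb hab, mem_iff b hbD a ha (adj2_symm hab)]
    · simp [crossing, haD, hbD, mem_iff a haD b hb hab]
    · simp [crossing, haD, hbD, mem_iff b hbD a ha (adj2_symm hab)]
    · simp [crossing, haD, hbD]
  · have notMem : ∀ a ∈ Q, a ∉ K := fun a ha haK => hQK ⟨a, ha, haK⟩
    exact ⟨0, fun a ha b hb _ => by simp [crossing, notMem a ha, notMem b hb]⟩

lemma crossing_square (hK : K ⊆ outerBoundary D)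
    (hstar : ∀ a ∈ K, ∀ b ∈ outerBoundary D, starGraph.Adj a b → b ∈ K) (x y : ℤ) :
    crossing D K (x, y) (x + 1, y) + crossing D K (x + 1, y) (x + 1, y + 1) =
      crossing D K (x, y) (x, y + 1) + crossing D K (x, y + 1) (x + 1, y + 1) := by
  obtain ⟨k, hk⟩ := exists_crossing_eq_mul_sub hK hstar (Q := Set.Icc (x, y) (x + 1, y + 1))
    fun a ha b hb => by
      simp only [Set.mem_Icc, Prod.le_def, supNorm, Prod.fst_sub, Prod.snd_sub] at *
      omega
  rw [hk _ (by simp) _ (by simp) (adj2_right x y), hk _ (by simp) _ (by simp) (adj2_up (x + 1) y),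
    hk _ (by simp) _ (by simp) (adj2_up x y), hk _ (by simp) _ (by simp) (adj2_right x (y + 1))]
  ring

/-- The crossing number of the star cluster `K` of `v` in the boundary has a potential `f`, which is
constant on `D` and on its complement; so all edges leaving `D` cross `K` as often as one at `v`. -/
theorem mem_clusterIn_outerBoundary (hD : ConnectedSet D) (hDc : ConnectedSet Dᶜ)
    (hv : v ∈ outerBoundary D) (hw : w ∈ outerBoundary D) :
    w ∈ clusterIn starGraph (outerBoundary D) v := by
  set K := clusterIn starGraph (outerBoundary D) v
  have hK : K ⊆ outerBoundary D := clusterIn_subset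
  obtain ⟨f, hf⟩ := exists_potential (crossing D K) crossing_comm
    (crossing_square hK fun a ha b hb hab => mem_clusterIn_of_adj ha hab hb)
  have const_on_D : ∀ a ∈ D, ∀ b ∈ D, f a = f b := fun a ha b hb =>
    (hD a ha b hb).apply_eq_of_forall_adj fun x hx y hy hxy => by
      have hxK : x ∉ K := fun h => (hK h).1 hx
      have hyK : y ∉ K := fun h => (hK h).1 hy
      have h := hf x y hxy
      simp only [crossing, hxK, hyK, Set.indicator_of_notMem, not_false_iff] at h
      linarith
  have const_on_compl : ∀ a ∈ Dᶜ, ∀ b ∈ Dᶜ, f a = f b := fun a ha b hb =>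
    (hDc a ha b hb).apply_eq_of_forall_adj fun x hx y hy hxy => by
      have h := hf x y hxy
      rw [crossing, Set.indicator_of_notMem hx, Set.indicator_of_notMem hy] at h
      linarith
  have crossing_eq : ∀ a ∈ D, ∀ b ∉ D, crossing D K a b = K.indicator 1 b := fun a ha b hb => by
    simp [crossing, ha, hb]
  have ⟨hvD, a, ha, hav⟩ := hv
  obtain ⟨hwD, b, hb, hbw⟩ := hw
  have indicator_eq : K.indicator (1 : ℤ × ℤ → ℤ) w = K.indicator 1 v := by
    rw [← crossing_eq a ha v hvD, ← crossing_eq b hb w hwD, hf a v hav, hf b w hbw,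
      const_on_D a ha b hb, const_on_compl v hvD w hwD]
  by_contra hwK
  simp [hwK, K, mem_clusterIn_self hv] at indicator_eq

end Crossing

/-! ### Half-planes -/

/-- The four linear forms `x₁`, `-x₁`, `x₂`, `-x₂`, whose maximum is the `ℓ^∞` norm. -/
def signedCoord (i : Fin 4) (x : ℤ × ℤ) : ℤ := ![x.1, -x.1, x.2, -x.2] i

lemma abs_signedCoord_le_supNorm (i : Fin 4) (x : ℤ × ℤ) : |signedCoord i x| ≤ supNorm x := by
  fin_cases i <;> simp [signedCoord, supNorm]

lemma signedCoord_sub (i : Fin 4) (x y : ℤ × ℤ) :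
    signedCoord i (x - y) = signedCoord i x - signedCoord i y := by
  fin_cases i
  exacts [rfl, neg_sub' _ _, rfl, neg_sub' _ _]

lemma exists_signedCoord_eq_supNorm (x : ℤ × ℤ) : ∃ i, signedCoord i x = supNorm x := by
  have h : x.1 = supNorm x ∨ -x.1 = supNorm x ∨ x.2 = supNorm x ∨ -x.2 = supNorm x := by
    simp only [supNorm]
    omega
  rcases h with h | h | h | h
  exacts [⟨0, h⟩, ⟨1, h⟩, ⟨2, h⟩, ⟨3, h⟩]

lemma signedCoord_neg (i : Fin 4) (x : ℤ × ℤ) : signedCoord i (-x) = -signedCoord i x := by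
  fin_cases i <;> simp [signedCoord]

lemma lt_supNorm_iff {n : ℕ} {x : ℤ × ℤ} : n < supNorm x ↔ ∃ i, signedCoord i x < -n := by
  constructor
  · intro h
    obtain ⟨i, hi⟩ := exists_signedCoord_eq_supNorm (-x)
    exact ⟨i, by simp only [signedCoord_neg, supNorm, Prod.fst_neg, Prod.snd_neg] at *; omega⟩
  · rintro ⟨i, hi⟩
    have h := (abs_le.1 (abs_signedCoord_le_supNorm i x)).1
    omega

lemma connectedSet_halfPlane (i : Fin 4) (t : ℤ) : ConnectedSet {x | signedCoord i x ≤ t} := by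
  fin_cases i
  · convert connectedSet_prod (Set.ordConnected_Iic (a := t)) Set.ordConnected_univ using 1
    ext; simp [signedCoord]
  · convert connectedSet_prod (Set.ordConnected_Ici (a := -t)) Set.ordConnected_univ using 1
    ext; simp [signedCoord, neg_le]
  · convert connectedSet_prod Set.ordConnected_univ (Set.ordConnected_Iic (a := t)) using 1
    ext; simp [signedCoord]
  · convert connectedSet_prod Set.ordConnected_univ (Set.ordConnected_Ici (a := -t)) using 1
    ext; simp [signedCoord, neg_le]

lemma connectedSet_lt_supNorm (n : ℕ) : ConnectedSet {x | n < supNorm x} := by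
  have connIn_of_lt (i : Fin 4) {x y : ℤ × ℤ} (hx : signedCoord i x < -n)
      (hy : signedCoord i y < -n) : ConnIn {x | n < supNorm x} x y :=
    (connectedSet_halfPlane i (-n - 1) x (Int.le_sub_one_of_lt hx) y
      (Int.le_sub_one_of_lt hy)).mono fun z hz => lt_supNorm_iff.2 ⟨i, Int.lt_of_le_sub_one hz⟩
  let corner (s t : ℤ) : ℤ × ℤ := (s * (n + 1), t * (n + 1))
  have connIn_corner : ∀ x, n < supNorm x → ConnIn {x | n < supNorm x} x (corner 1 1) := by
    intro x hx
    obtain ⟨i, hi⟩ := lt_supNorm_iff.1 hx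
    have corners : ConnIn {x | n < supNorm x} (corner (-1) (-1)) (corner 1 1) :=
      (connIn_of_lt 2 (y := corner 1 (-1)) (by simp [signedCoord, corner])
        (by simp [signedCoord, corner])).trans
      (connIn_of_lt 1 (by simp [signedCoord, corner]) (by simp [signedCoord, corner]))
    fin_cases i
    · exact (connIn_of_lt 0 hi (by simp [signedCoord, corner])).trans corners
    · exact connIn_of_lt 1 hi (by simp [signedCoord, corner])
    · exact (connIn_of_lt 2 hi (by simp [signedCoord, corner])).trans corners
    · exact connIn_of_lt 3 hi (by simp [signedCoord, corner])
  exact fun u hu v hv => (connIn_corner u hu).trans (connIn_corner v hv).symm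

lemma lt_supNorm_subset {D : Set (ℤ × ℤ)} {n : ℕ} (hD : D.Infinite)
    (hDn : ∀ v ∈ outerBoundary D, supNorm v ≤ n) :
    {x | n < supNorm x} ⊆ D := by
  obtain ⟨u, huD, hu⟩ := exists_lt_supNorm_of_infinite hD n
  refine fun v hv => mem_of_disjoint_outerBoundary (connectedSet_lt_supNorm n) ?_ hu huD hv
  exact Set.disjoint_left.2 fun x hx hxD => hx.not_ge (hDn x hxD)

lemma exists_signedCoord_nonpos {D : Set (ℤ × ℤ)} {n : ℕ} (hD : {x | n < supNorm x} ⊆ D)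
    (hD₀ : 0 ∉ D) (i : Fin 4) :
    ∃ v ∈ outerBoundary D, signedCoord i v ≤ 0 := by
  by_contra! hpos
  obtain ⟨u, hu⟩ : ∃ u, signedCoord i u < -n := by
    fin_cases i
    exacts [⟨(-n - 1, 0), by simp [signedCoord]⟩, ⟨(n + 1, 0), by simp [signedCoord]⟩,
      ⟨(0, -n - 1), by simp [signedCoord]⟩, ⟨(0, n + 1), by simp [signedCoord]⟩]
  refine hD₀ (mem_of_disjoint_outerBoundary (connectedSet_halfPlane i 0) ?_ (u := u) ?_
    (hD (lt_supNorm_iff.2 ⟨i, hu⟩)) ?_)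
  · exact Set.disjoint_left.2 fun x hx hxD => (hpos x hxD).not_ge hx
  · exact hu.le.trans (by simp)
  · fin_cases i <;> simp [signedCoord]

lemma exists_infinite_compIn_compl {A : Set (ℤ × ℤ)} (hA : A.Finite) :
    ∃ c ∉ A, (compIn Aᶜ c).Infinite := by
  obtain ⟨n, hn⟩ := exists_supNorm_le_of_finite hA
  have subset_compl : {x | n < supNorm x} ⊆ Aᶜ := fun x hx hxA => hx.not_ge (hn x hxA)
  have infinite_far : {x | n < supNorm x}.Infinite := by
    simpa [Set.compl_def] using (finite_supNorm_le n).infinite_compl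
  obtain ⟨c, hc⟩ := infinite_far.nonempty
  exact ⟨c, subset_compl hc, infinite_far.mono fun x hx =>
    (connectedSet_lt_supNorm n c hc x hx).mono subset_compl⟩

/-! ### Closed paths around the component of the origin -/

section ArmEvent

variable {D : Set (ℤ × ℤ)} {c x y : ℤ × ℤ} {ω : ℤ × ℤ → Bool}

/-- The arm event at `x`: a closed self-avoiding star path of `‖x‖` steps starts at `x`. -/
def armEvent (x : ℤ × ℤ) : Set (ℤ × ℤ → Bool) := closedPathEvent starGraph (supNorm x) x

lemma mem_armEvent_of_supNorm_le (hy : y ∈ clusterIn starGraph {z | ω z = false} x)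
    (hxy : supNorm x ≤ supNorm (y - x)) : ω ∈ armEvent x :=
  mem_closedPathEvent_of_le_dist hy (hxy.trans (supNorm_sub_le_dist ⟨hy.choose⟩))

lemma finite_clusterIn_closed (hω : {x | ω ∈ armEvent x}.Finite) (z : ℤ × ℤ) :
    (clusterIn starGraph {z | ω z = false} z).Finite := by
  by_contra hinf
  refine hinf (hω.subset fun x hx => ?_)
  obtain ⟨y, hy, hxy⟩ := exists_lt_supNorm_of_infinite hinf (2 * supNorm x)
  refine mem_armEvent_of_supNorm_le (mem_clusterIn_trans (mem_clusterIn_symm hx) hy) ?_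
  simp only [supNorm, Prod.fst_sub, Prod.snd_sub] at *
  omega

/-- `x` is a site of maximal norm in the closed star cluster containing the outer boundary of `D`,
and the arm reaches from `x` across the line through `0` orthogonal to its largest coordinate. -/
lemma exists_mem_armEvent_of_closed_outerBoundary (hω : {x | ω ∈ armEvent x}.Finite)
    (hD : ConnectedSet D) (hDc : ConnectedSet Dᶜ) (hD₀ : 0 ∉ D) (hDinf : D.Infinite)
    (hclosed : ∀ v ∈ outerBoundary D, ω v = false) :
    ∃ x, ω ∈ armEvent x ∧ (∀ v ∈ outerBoundary D, supNorm v ≤ supNorm x) ∧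
      ∀ a ∉ D, supNorm a ≤ supNorm x := by
  obtain ⟨z, hz⟩ := outerBoundary_nonempty hDinf.nonempty ⟨0, hD₀⟩
  set K := clusterIn starGraph {z | ω z = false} z
  have boundary_subset : outerBoundary D ⊆ K := fun v hv =>
    clusterIn_mono hclosed (mem_clusterIn_outerBoundary hD hDc hz hv)
  obtain ⟨x, hxK, hx⟩ :=
    Set.exists_max_image K supNorm (finite_clusterIn_closed hω z) ⟨z, boundary_subset hz⟩
  have boundary_le : ∀ v ∈ outerBoundary D, supNorm v ≤ supNorm x :=
    fun v hv => hx v (boundary_subset hv)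
  have far_subset : {y | supNorm x < supNorm y} ⊆ D := lt_supNorm_subset hDinf boundary_le
  refine ⟨x, ?_, boundary_le, fun a ha => not_lt.1 fun h => ha (far_subset h)⟩
  obtain ⟨i, hi⟩ := exists_signedCoord_eq_supNorm x
  obtain ⟨y, hy, hyi⟩ := exists_signedCoord_nonpos far_subset hD₀ i
  refine mem_armEvent_of_supNorm_le
    (mem_clusterIn_trans (mem_clusterIn_symm hxK) (boundary_subset hy)) ?_
  have h := (abs_le.1 (abs_signedCoord_le_supNorm i (y - x))).1
  rw [signedCoord_sub] at h
  omega

/-- Otherwise the union of a ball containing all arm sites and of the open clusters touching it is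
finite, and is enclosed by closed sites lying outside the ball. -/
lemma infCluster_nonempty (hω : {x | ω ∈ armEvent x}.Finite) : (InfCluster ω).Nonempty := by
  by_contra hempty
  obtain ⟨R, hR⟩ := exists_supNorm_le_of_finite hω
  set W : Set (ℤ × ℤ) := {z | supNorm z ≤ R} ∪ {z | ω z = true}
  have h₀ : (0 : ℤ × ℤ) ∈ {z | supNorm z ≤ R} := by simp [supNorm]
  have finite_comp : (compIn W 0).Finite :=
    finite_compIn_union (finite_supNorm_le R)
      (fun x hx => by_contra fun hinf => hempty ⟨x, hx, hinf⟩) h₀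
  set A : Set (ℤ × ℤ) := compIn W 0 ∪ outerBoundary (compIn W 0) with hA
  have h₀A : (0 : ℤ × ℤ) ∈ A := Or.inl (ConnIn.refl W 0)
  obtain ⟨c, hcA, hDinf⟩ := exists_infinite_compIn_compl
    (finite_comp.union (finite_outerBoundary finite_comp))
  rw [← hA] at hcA hDinf
  have boundary_notMem : ∀ v ∈ outerBoundary (compIn Aᶜ c), v ∉ W := by
    intro v hv
    obtain ⟨u, hu, huv⟩ := hv.2
    refine notMem_of_mem_outerBoundary_compIn (Or.inl h₀)
      ((outerBoundary_compIn_compl_subset hcA hv).resolve_left fun hvA => hu.mem hcA ?_)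
    by_cases huA : u ∈ compIn W 0
    exacts [Or.inl huA, Or.inr ⟨huA, v, hvA, adj2_symm huv⟩]
  obtain ⟨x, hx, boundary_le, -⟩ := exists_mem_armEvent_of_closed_outerBoundary hω
    (connectedSet_compIn Aᶜ c)
    (connectedSet_compl_compIn_compl
      (connectedSet_union_outerBoundary (connectedSet_compIn W 0)) h₀A hcA)
    (fun h => h.mem hcA h₀A) hDinf
    fun v hv => by simpa using fun h => boundary_notMem v hv (Or.inr h)
  obtain ⟨z, hz⟩ := outerBoundary_nonempty hDinf.nonempty ⟨0, fun h => h.mem hcA h₀A⟩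
  exact boundary_notMem z hz (Or.inl ((boundary_le z hz).trans (hR x hx)))

lemma mem_infCluster_of_connIn (hc : c ∈ InfCluster ω) (h : ConnIn {z | ω z = true} c y) :
    y ∈ InfCluster ω :=
  ⟨h.mem hc.1, hc.2.mono fun _ hz => h.symm.trans hz⟩

lemma exists_mem_armEvent_of_compOfOrigin (hω : {x | ω ∈ armEvent x}.Finite)
    (h₀ : 0 ∉ InfCluster ω) :
    ∃ x, ω ∈ armEvent x ∧ ∀ a ∈ CompOfOrigin ω, supNorm a ≤ supNorm x := by
  obtain ⟨c, hc⟩ := infCluster_nonempty hω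
  set A := compIn (InfCluster ω)ᶜ 0
  have A_subset : ∀ a ∈ A, a ∉ InfCluster ω := fun a ha => ha.mem h₀
  have hcA : c ∉ A := fun h => A_subset c h hc
  have h₀A : (0 : ℤ × ℤ) ∈ A := ConnIn.refl _ 0
  have D_infinite : (compIn Aᶜ c).Infinite := hc.2.mono fun y hy =>
    (connectedSet_compIn _ c c (ConnIn.refl _ c) y hy).mono fun z hz hzA =>
      A_subset z hzA (mem_infCluster_of_connIn hc hz)
  have boundary_closed : ∀ v ∈ outerBoundary (compIn Aᶜ c), ω v = false := by
    intro v hv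
    have hvA : v ∈ A := outerBoundary_compIn_compl_subset hcA hv
    obtain ⟨u, hu, huv⟩ := hv.2
    have huC : u ∈ InfCluster ω := by
      by_contra huC
      exact hu.mem hcA (hvA.tail (A_subset v hvA) huC (adj2_symm huv))
    by_contra hopen
    exact A_subset v hvA
      (mem_infCluster_of_connIn huC (ConnIn.of_adj huC.1 (by simpa using hopen) huv))
  obtain ⟨x, hx, -, hle⟩ := exists_mem_armEvent_of_closed_outerBoundary hω
    (connectedSet_compIn Aᶜ c)
    (connectedSet_compl_compIn_compl (connectedSet_compIn _ 0) h₀A hcA)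
    (fun h => h.mem hcA h₀A) D_infinite boundary_closed
  exact ⟨x, hx, fun a ha => hle a fun h => h.mem hcA ha.2⟩

lemma encard_compOfOrigin_le_tsum (ω : ℤ × ℤ → Bool) :
    ((CompOfOrigin ω).encard : ENNReal) ≤
      ∑' x, (armEvent x).indicator (fun _ => (2 * supNorm x + 1 : ENNReal) ^ 2) ω := by
  set N := ∑' x, (armEvent x).indicator (fun _ => (2 * supNorm x + 1 : ENNReal) ^ 2) ω
  by_cases hN : N = ⊤
  · exact hN ▸ le_top
  have hω : {x | ω ∈ armEvent x}.Finite := by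
    refine (ENNReal.finite_const_le_of_tsum_ne_top hN one_ne_zero).subset
      fun x (hx : ω ∈ armEvent x) => ?_
    rw [Set.mem_ofPred_eq, Set.indicator_of_mem hx]
    exact one_le_pow₀ le_add_self
  by_cases h₀ : 0 ∈ InfCluster ω
  · have hempty : CompOfOrigin ω = ∅ := by
      ext y
      exact iff_of_false (fun h => h.1 h₀) id
    simp [hempty]
  obtain ⟨x, hx, hle⟩ := exists_mem_armEvent_of_compOfOrigin hω h₀
  calc ((CompOfOrigin ω).encard : ENNReal)
      ≤ ({a | supNorm a ≤ supNorm x}.encard : ENNReal) :=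
        ENat.toENNReal_le.2 (Set.encard_le_encard hle)
    _ = (armEvent x).indicator (fun _ => (2 * supNorm x + 1 : ENNReal) ^ 2) ω := by
        rw [encard_supNorm_le, Set.indicator_of_mem hx]
        norm_cast
    _ ≤ N := ENNReal.le_tsum x

end ArmEvent

/-! ### The expectation -/

lemma lintegral_encard_compOfOrigin_le {μ : Measure (ℤ × ℤ → Bool)} {q : ENNReal}
    (hμ : ∀ F : Finset (ℤ × ℤ), μ {ω | ∀ z ∈ F, ω z = false} ≤ q ^ F.card) :
    ∫⁻ ω, (CompOfOrigin ω).encard ∂μ ≤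
      (∑' x, (2 * supNorm x + 1) ^ 2 * (8 * q) ^ supNorm x) * q := by
  have measurableSet_armEvent (x : ℤ × ℤ) : MeasurableSet (armEvent x) :=
    measurableSet_closedPathEvent _ x
  calc ∫⁻ ω, (CompOfOrigin ω).encard ∂μ
      ≤ ∫⁻ ω, ∑' x, (armEvent x).indicator (fun _ => (2 * supNorm x + 1 : ENNReal) ^ 2) ω ∂μ :=
        lintegral_mono encard_compOfOrigin_le_tsum
    _ = ∑' x, (2 * supNorm x + 1) ^ 2 * μ (armEvent x) := by
        rw [lintegral_tsum fun x =>
          (measurable_const.indicator (measurableSet_armEvent x)).aemeasurable]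
        simp only [lintegral_indicator_const (measurableSet_armEvent _)]
    _ ≤ ∑' x, (2 * supNorm x + 1) ^ 2 * (8 ^ supNorm x * q ^ (supNorm x + 1)) := by
        gcongr with x
        exact mod_cast measure_closedPathEvent_le hμ (fun v => (degree_starGraph v).le) _ x
    _ = (∑' x, (2 * supNorm x + 1) ^ 2 * (8 * q) ^ supNorm x) * q := by
        rw [← ENNReal.tsum_mul_right]
        congr with x
        ring

lemma tsum_comp_supNorm (g : ℕ → ENNReal) :
    ∑' x, g (supNorm x) = ∑' n, (Finset.box n : Finset (ℤ × ℤ)).card * g n := by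
  have fiber_eq (n : ℕ) : supNorm ⁻¹' {n} = (Finset.box n : Finset (ℤ × ℤ)) := by
    ext x
    exact mem_box_iff_supNorm_eq.symm
  rw [← ENNReal.tsum_fiberwise _ supNorm]
  refine tsum_congr fun n => ?_
  calc ∑' x : supNorm ⁻¹' {n}, g (supNorm x)
      = ∑' _ : supNorm ⁻¹' {n}, g n := tsum_congr fun x => congrArg g x.2
    _ = (Finset.box n : Finset (ℤ × ℤ)).card * g n := by
        rw [ENNReal.tsum_set_const, fiber_eq, Set.encard_coe_eq_coe_finsetCard,
          ENat.toENNReal_coe]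

lemma tsum_supNorm_ne_top {r : ENNReal} (hr : r < 1) :
    ∑' x, (2 * supNorm x + 1 : ENNReal) ^ 2 * r ^ supNorm x ≠ ⊤ := by
  lift r to NNReal using hr.ne_top
  have card_box_le (n : ℕ) : (Finset.box n : Finset (ℤ × ℤ)).card ≤ 8 * n + 1 := by
    rcases eq_or_ne n 0 with rfl | hn
    · simp
    · rw [Int.card_box hn]
      omega
  have summable_poly : Summable fun n : ℕ => (8 * n + 1) * ((2 * n + 1) ^ 2 * r ^ n) := by
    have h (k : ℕ) := summable_pow_mul_geometric_of_norm_lt_one (r := (r : ℝ)) k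
      (by simpa using hr)
    rw [← NNReal.summable_coe]
    refine (((((h 3).mul_left 32).add ((h 2).mul_left 36)).add ((h 1).mul_left 12)).add
      (h 0)).congr fun n => ?_
    push_cast
    ring
  refine ne_top_of_le_ne_top (ENNReal.tsum_coe_ne_top_iff_summable.2 summable_poly) ?_
  rw [tsum_comp_supNorm fun n => (2 * n + 1) ^ 2 * r ^ n]
  push_cast
  gcongr with n
  exact mod_cast card_box_le n

theorem expected_component_size_bound_general (p₀ : ℝ) (hp₀ : 7 / 8 < p₀) :
    ∃ α : ℝ, 0 < α ∧
      ∀ (p : ℝ), p₀ ≤ p → p ≤ 1 →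
        ∀ (μ : Measure ((ℤ × ℤ) → Bool)),
          (∀ (F : Finset (ℤ × ℤ)) (b : (ℤ × ℤ) → Bool),
            μ {ω | ∀ x ∈ F, ω x = b x} =
              ENNReal.ofReal (∏ x ∈ F, if b x then p else 1 - p)) →
          ∫⁻ ω, (CompOfOrigin ω).encard ∂μ ≤ ENNReal.ofReal (α * (1 - p)) := by
  let S (r : ENNReal) : ENNReal := ∑' x, (2 * supNorm x + 1 : ENNReal) ^ 2 * r ^ supNorm x
  let C : ENNReal := S (8 * ENNReal.ofReal (1 - p₀))
  have hC : C ≠ ⊤ := tsum_supNorm_ne_top <| by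
    rw [← ENNReal.ofReal_ofNat 8, ← ENNReal.ofReal_mul (by norm_num), ENNReal.ofReal_lt_one]
    linarith
  refine ⟨C.toReal + 1, by positivity, fun p hp hp₁ μ hμ => ?_⟩
  have measure_closed (F : Finset (ℤ × ℤ)) :
      μ {ω | ∀ z ∈ F, ω z = false} ≤ ENNReal.ofReal (1 - p) ^ F.card := by
    simpa [ENNReal.ofReal_pow (sub_nonneg.2 hp₁)] using (hμ F fun _ => false).le
  calc ∫⁻ ω, (CompOfOrigin ω).encard ∂μ
      ≤ S (8 * ENNReal.ofReal (1 - p)) * ENNReal.ofReal (1 - p) :=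
        lintegral_encard_compOfOrigin_le measure_closed
    _ ≤ C * ENNReal.ofReal (1 - p) := by
        simp only [C, S]
        gcongr
    _ ≤ ENNReal.ofReal (C.toReal + 1) * ENNReal.ofReal (1 - p) := by
        gcongr
        exact (ENNReal.le_ofReal_iff_toReal_le hC (by positivity)).2 (by linarith)
    _ = ENNReal.ofReal ((C.toReal + 1) * (1 - p)) := (ENNReal.ofReal_mul (by positivity)).symm

/-- there is a universal constant `α > 0` such that for Bernoulli
site percolation on `ℤ²` with parameter `p ≥ 8/9` (the measure `μ` being
characterized by the i.i.d. cylinder condition `hμ`), the expected size of the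
component `G` of the complement of the infinite cluster containing the origin
satisfies `E|G| ≤ α(1−p)`. -/
theorem expected_component_size_bound :
    ∃ α : ℝ, 0 < α ∧
      ∀ (p : ℝ), 8 / 9 ≤ p → p ≤ 1 →
        ∀ (μ : Measure ((ℤ × ℤ) → Bool)), IsProbabilityMeasure μ →
          (∀ (F : Finset (ℤ × ℤ)) (b : (ℤ × ℤ) → Bool),
            μ {ω | ∀ x ∈ F, ω x = b x} =
              ENNReal.ofReal (∏ x ∈ F, if b x then p else 1 - p)) →
          ∫⁻ ω, (CompOfOrigin ω).encard ∂μ ≤ ENNReal.ofReal (α * (1 - p)) := by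
  obtain ⟨α, hα, h⟩ := expected_component_size_bound_general (8 / 9) (by norm_num)
  exact ⟨α, hα, fun p hp hp₁ μ _ hμ => h p hp hp₁ μ hμ⟩

end
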